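/- Let g : M₃(ℝ) → M₃(ℝ) be the map g(G) = (det(I + G) − 1) · cof(I + G). Then g is differentiable, and there exists a constant C > 0 such that for all real 3×3 matrices G and A: (Dg(G)[A]) : A ≥ (tr A)² − C (‖G‖ + ‖G‖² + ‖G‖³ + ‖G‖⁴) ‖A‖². -/

import Mathlib

open Matrix BigOperators

attribute [local instance] Matrix.normedAddCommGroup Matrix.normedSpace

/-- Squared Frobenius norm of a real 3×3 matrix. -/
noncomputable def frobSq (A : Matrix (Fin 3) (Fin 3) ℝ) : ℝ := ∑ i, ∑ j, (A i j) ^ 2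

/-- Frobenius norm of a real 3×3 matrix. -/
noncomputable def fro (A : Matrix (Fin 3) (Fin 3) ℝ) : ℝ := Real.sqrt (frobSq A)

/-- The cofactor matrix of a 3×3 matrix: the transpose of the adjugate, so that
`F * (cof F)ᵀ = det F • 1`. -/
noncomputable def cof (F : Matrix (Fin 3) (Fin 3) ℝ) : Matrix (Fin 3) (Fin 3) ℝ :=
  (Matrix.adjugate F)ᵀ

/-- The quasi-incompressibility map `g(G) = (det(I+G) − 1)·cof(I+G)`. -/
noncomputable def gQinc (G : Matrix (Fin 3) (Fin 3) ℝ) : Matrix (Fin 3) (Fin 3) ℝ :=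
  (Matrix.det (1 + G) - 1) • cof (1 + G)

lemma fro_nonneg' (A : Matrix (Fin 3) (Fin 3) ℝ) : 0 ≤ fro A := Real.sqrt_nonneg _

lemma frobSq_nonneg' (A : Matrix (Fin 3) (Fin 3) ℝ) : 0 ≤ frobSq A :=
  Finset.sum_nonneg fun _ _ => Finset.sum_nonneg fun _ _ => sq_nonneg _

lemma entry_le_fro (A : Matrix (Fin 3) (Fin 3) ℝ) (i j : Fin 3) : |A i j| ≤ fro A := by
  unfold fro
  apply Real.abs_le_sqrt
  unfold frobSq
  calc (A i j) ^ 2 ≤ ∑ j, (A i j) ^ 2 :=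
        Finset.single_le_sum (f := fun j => (A i j) ^ 2) (fun _ _ => sq_nonneg _)
          (Finset.mem_univ j)
    _ ≤ _ := Finset.single_le_sum (f := fun i => ∑ j, (A i j) ^ 2)
          (fun _ _ => Finset.sum_nonneg fun _ _ => sq_nonneg _) (Finset.mem_univ i)

lemma pair_bound (X Y : Matrix (Fin 3) (Fin 3) ℝ) (x y : ℝ)
    (hX : ∀ i j, |X i j| ≤ x) (hY : ∀ i j, |Y i j| ≤ y) :
    |∑ i, ∑ j, X i j * Y i j| ≤ 9 * (x * y) := by
  have hx : 0 ≤ x := (abs_nonneg _).trans (hX 0 0)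
  calc |∑ i, ∑ j, X i j * Y i j| ≤ ∑ i, |∑ j, X i j * Y i j| := Finset.abs_sum_le_sum_abs _ _
    _ ≤ ∑ i, ∑ j, |X i j * Y i j| :=
        Finset.sum_le_sum fun _ _ => Finset.abs_sum_le_sum_abs _ _
    _ ≤ ∑ i : Fin 3, ∑ j : Fin 3, x * y := by
        refine Finset.sum_le_sum fun i _ => Finset.sum_le_sum fun j _ => ?_
        rw [abs_mul]
        exact mul_le_mul (hX i j) (hY i j) (abs_nonneg _) hx
    _ = _ := by simp; ring

lemma trace_bound (X : Matrix (Fin 3) (Fin 3) ℝ) (x : ℝ) (hX : ∀ i j, |X i j| ≤ x) :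
    |X.trace| ≤ 3 * x := by
  rw [Matrix.trace_fin_three]
  have h0 := abs_le.1 (hX 0 0)
  have h1 := abs_le.1 (hX 1 1)
  have h2 := abs_le.1 (hX 2 2)
  rw [abs_le]; constructor <;> linarith

lemma two_bound (a b c d x : ℝ) (ha : |a| ≤ x) (hb : |b| ≤ x) (hc : |c| ≤ x) (hd : |d| ≤ x) :
    |a * b - c * d| ≤ 2 * x ^ 2 := by
  have hx : 0 ≤ x := (abs_nonneg _).trans ha
  have h1 : |a * b| ≤ x * x := by
    rw [abs_mul]; exact mul_le_mul ha hb (abs_nonneg _) hx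
  have h2 : |c * d| ≤ x * x := by
    rw [abs_mul]; exact mul_le_mul hc hd (abs_nonneg _) hx
  rw [abs_le] at *
  constructor <;> nlinarith

lemma cof_eq (F : Matrix (Fin 3) (Fin 3) ℝ) : cof F =
    !![F 1 1 * F 2 2 - F 1 2 * F 2 1, F 1 2 * F 2 0 - F 1 0 * F 2 2, F 1 0 * F 2 1 - F 1 1 * F 2 0;
       F 0 2 * F 2 1 - F 0 1 * F 2 2, F 0 0 * F 2 2 - F 0 2 * F 2 0, F 0 1 * F 2 0 - F 0 0 * F 2 1;
       F 0 1 * F 1 2 - F 0 2 * F 1 1, F 0 2 * F 1 0 - F 0 0 * F 1 2,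
       F 0 0 * F 1 1 - F 0 1 * F 1 0] := by
  unfold cof
  rw [Matrix.adjugate_fin_three]
  ext i j
  fin_cases i <;> fin_cases j <;> simp <;> ring

lemma cof_bound (X : Matrix (Fin 3) (Fin 3) ℝ) (x : ℝ) (hX : ∀ i j, |X i j| ≤ x) (i j : Fin 3) :
    |cof X i j| ≤ 2 * x ^ 2 := by
  rw [cof_eq]
  fin_cases i <;> fin_cases j <;> simp <;> apply two_bound <;> apply hX

lemma cof_pair (G A : Matrix (Fin 3) (Fin 3) ℝ) :
    ∑ i, ∑ j, cof (1 + G) i j * A i j = A.trace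
      + (G.trace * A.trace - ∑ i, ∑ j, G i j * Aᵀ i j + ∑ i, ∑ j, cof G i j * A i j) := by
  rw [cof_eq, cof_eq, Matrix.trace_fin_three, Matrix.trace_fin_three]
  simp [Fin.sum_univ_three]
  ring

lemma det_exp (G : Matrix (Fin 3) (Fin 3) ℝ) :
    (1 + G).det - 1 = G.trace + (G.trace * G.trace - ∑ i, ∑ j, G i j * Gᵀ i j) / 2
      + (∑ i, ∑ j, cof G i j * G i j) / 3 := by
  rw [cof_eq, Matrix.trace_fin_three, Matrix.det_fin_three]
  simp [Fin.sum_univ_three]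
  ring

lemma gQinc_diff : Differentiable ℝ gQinc := by
  have he : ∀ i j : Fin 3, Differentiable ℝ (fun G : Matrix (Fin 3) (Fin 3) ℝ => (1 + G) i j) := by
    intro i j
    have : Differentiable ℝ (fun G : Matrix (Fin 3) (Fin 3) ℝ => G i j) :=
      (LinearMap.toContinuousLinearMap
        (Matrix.entryLinearMap ℝ ℝ i j : Matrix (Fin 3) (Fin 3) ℝ →ₗ[ℝ] ℝ)).differentiable
    exact this.const_add ((1 : Matrix (Fin 3) (Fin 3) ℝ) i j)
  have hg : ∀ i j : Fin 3, Differentiable ℝ (fun G => gQinc G i j) := by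
    intro i j
    simp only [gQinc, cof_eq, Matrix.det_fin_three, Matrix.smul_apply, smul_eq_mul]
    generalize h1 : (fun (G : Matrix (Fin 3) (Fin 3) ℝ) => 1 + G) = f at *
    have he' : ∀ i j : Fin 3, Differentiable ℝ (fun G : Matrix (Fin 3) (Fin 3) ℝ => f G i j) := by
      subst h1; exact he
    have h2 : ∀ G, 1 + G = f G := fun G => by rw [← h1]
    simp only [h2]
    clear h1 h2 he
    fin_cases i <;> fin_cases j <;> simp <;> fun_prop
  exact differentiable_pi.2 fun i => differentiable_pi.2 fun j => hg i j

lemma line_poly (G A : Matrix (Fin 3) (Fin 3) ℝ) (x : ℝ) :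
    ∑ i, ∑ j, gQinc (G + x • A) i j * A i j =
      ((1 + G).det - 1 + x * (∑ i, ∑ j, cof (1 + G) i j * A i j)
          + x ^ 2 * (∑ i, ∑ j, cof A i j * (1 + G) i j) + x ^ 3 * A.det) *
        ((∑ i, ∑ j, cof (1 + G) i j * A i j)
          + 2 * x * (∑ i, ∑ j, cof A i j * (1 + G) i j) + 3 * x ^ 2 * A.det) := by
  have h : 1 + (G + x • A) = (1 + G) + x • A := by abel
  unfold gQinc
  rw [h]
  generalize 1 + G = F
  simp only [Matrix.smul_apply, smul_eq_mul, mul_assoc, ← Finset.mul_sum]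
  congr 1
  · rw [cof_eq, cof_eq, Matrix.det_fin_three, Matrix.det_fin_three, Matrix.det_fin_three]
    simp [Fin.sum_univ_three]
    ring
  · rw [cof_eq, cof_eq, cof_eq, Matrix.det_fin_three]
    simp [Fin.sum_univ_three]
    ring

lemma fderiv_pair (G A : Matrix (Fin 3) (Fin 3) ℝ) :
    ∑ i, ∑ j, (fderiv ℝ gQinc G A) i j * A i j =
      (∑ i, ∑ j, cof (1 + G) i j * A i j) ^ 2
        + ((1 + G).det - 1) * (2 * ∑ i, ∑ j, cof A i j * (1 + G) i j) := by
  have hl : HasDerivAt (fun x : ℝ => gQinc (G + x • A)) (fderiv ℝ gQinc G A) 0 :=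
    ((gQinc_diff G).hasFDerivAt.hasLineDerivAt A)
  have hl' : ∀ i j, HasDerivAt (fun x : ℝ => gQinc (G + x • A) i j)
      (fderiv ℝ gQinc G A i j) 0 := fun i j =>
    hasDerivAt_pi.1 (hasDerivAt_pi.1 hl i) j
  have h1 : HasDerivAt (fun x : ℝ => ∑ i, ∑ j, gQinc (G + x • A) i j * A i j)
      (∑ i, ∑ j, (fderiv ℝ gQinc G A) i j * A i j) 0 :=
    HasDerivAt.fun_sum fun i _ => HasDerivAt.fun_sum fun j _ => (hl' i j).mul_const _
  simp only [line_poly] at h1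
  refine h1.unique ?_
  generalize (∑ i, ∑ j, cof (1 + G) i j * A i j) = c
  generalize (∑ i, ∑ j, cof A i j * (1 + G) i j) = e
  generalize (1 + G).det - 1 = d
  generalize A.det = a
  have hx := hasDerivAt_id' (0 : ℝ)
  have := ((((hx.mul_const c).const_add d).add ((hx.pow 2).mul_const e)).add
    ((hx.pow 3).mul_const a)).mul
    ((((hx.const_mul 2).mul_const e).const_add c).add (((hx.pow 2).const_mul 3).mul_const a))
  refine HasDerivAt.congr_deriv this ?_
  simp
  try ring

/-- `g` is differentiable and its derivative satisfies the coercivity bound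
`Dg(G)[A] : A ≥ (tr A)² − C(‖G‖+‖G‖²+‖G‖³+‖G‖⁴)‖A‖²`. -/
theorem quasi_incompressible_coercivity :
    Differentiable ℝ gQinc ∧
      ∃ C : ℝ, 0 < C ∧ ∀ G A : Matrix (Fin 3) (Fin 3) ℝ,
        ∑ i, ∑ j, (fderiv ℝ gQinc G A) i j * A i j
          ≥ (Matrix.trace A) ^ 2
              - C * (fro G + (fro G) ^ 2 + (fro G) ^ 3 + (fro G) ^ 4) * frobSq A := by
  refine ⟨gQinc_diff, 1000, by norm_num, fun G A => ?_⟩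
  rw [fderiv_pair, cof_pair, det_exp]
  have hs : frobSq A = fro A ^ 2 := (Real.sq_sqrt (frobSq_nonneg' A)).symm
  rw [hs]
  have hG := entry_le_fro G
  have hA := entry_le_fro A
  have ht0 := fro_nonneg' G
  have hs0 := fro_nonneg' A
  generalize fro G = t at *
  generalize fro A = s at *
  have hF : ∀ i j, |(1 + G) i j| ≤ 1 + t := by
    intro i j
    rw [Matrix.add_apply]
    refine (abs_add_le _ _).trans (add_le_add ?_ (hG i j))
    rw [Matrix.one_apply]
    split_ifs <;> simp
  have b1 := trace_bound G t hG
  have b2 := trace_bound A s hA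
  have b3 := pair_bound G Aᵀ t s hG (fun i j => hA j i)
  have b4 := pair_bound (cof G) A _ s (cof_bound G t hG) hA
  have b5 := pair_bound G Gᵀ t t hG (fun i j => hG j i)
  have b6 := pair_bound (cof G) G _ t (cof_bound G t hG) hG
  have b7 := pair_bound (cof A) (1 + G) _ _ (cof_bound A s hA) hF
  generalize (∑ i, ∑ j, G i j * Aᵀ i j) = p3 at *
  generalize (∑ i, ∑ j, cof G i j * A i j) = p4 at *
  generalize (∑ i, ∑ j, G i j * Gᵀ i j) = p5 at *
  generalize (∑ i, ∑ j, cof G i j * G i j) = p6 at *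
  generalize (∑ i, ∑ j, cof A i j * (1 + G) i j) = p7 at *
  generalize G.trace = g at *
  generalize A.trace = a at *
  have c1 : |g * a| ≤ 3 * t * (3 * s) := by
    rw [abs_mul]; exact mul_le_mul b1 b2 (abs_nonneg _) (by positivity)
  have c2 : |g * g| ≤ 3 * t * (3 * t) := by
    rw [abs_mul]; exact mul_le_mul b1 b1 (abs_nonneg _) (by positivity)
  have c3 : |g * a - p3 + p4| ≤ 18 * t * s + 18 * t ^ 2 * s := by
    rw [abs_le] at *; constructor <;> linarith
  have c4 : |g + (g * g - p5) / 2 + p6 / 3| ≤ 3 * t + 9 * t ^ 2 + 6 * t ^ 3 := by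
    rw [abs_le] at *; constructor <;> linarith
  generalize g * a - p3 + p4 = L at *
  generalize g + (g * g - p5) / 2 + p6 / 3 = d at *
  have c5 : |a * L| ≤ 3 * s * (18 * t * s + 18 * t ^ 2 * s) := by
    rw [abs_mul]; exact mul_le_mul b2 c3 (abs_nonneg _) (by positivity)
  have c6 : |d * p7| ≤ (3 * t + 9 * t ^ 2 + 6 * t ^ 3) * (9 * (2 * s ^ 2 * (1 + t))) := by
    rw [abs_mul]; exact mul_le_mul c4 b7 (abs_nonneg _) (by positivity)
  have c5' := (abs_le.1 c5).1
  have c6' := (abs_le.1 c6).1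
  have q1 : 0 ≤ t * s ^ 2 := by positivity
  have q2 : 0 ≤ t ^ 2 * s ^ 2 := by positivity
  have q3 : 0 ≤ t ^ 3 * s ^ 2 := by positivity
  have q4 : 0 ≤ t ^ 4 * s ^ 2 := by positivity
  have q5 : 0 ≤ L ^ 2 := sq_nonneg L
  linarith
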